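/- For all regular languages L₁ and L₂ over a finite alphabet Σ, tc(L₁ ∪ L₂) ≤ 2·(tc(L₁)·tc(L₂) + tc(L₁) + tc(L₂)). -/

import Mathlib

/-- An incomplete DFA over alphabet `α` with state type `σ`:
the transition function is a partial function, modelled as `Option`-valued. -/
structure IDFA (α : Type) (σ : Type) where
  /-- The (partial) transition function. -/
  step : σ → α → Option σ
  /-- The start state. -/
  start : σ
  /-- The set of accepting states. -/
  accept : Set σ

namespace IDFA

variable {α σ : Type}

/-- The extended (partial) transition function on words. -/
def evalFrom (A : IDFA α σ) (q : σ) (w : List α) : Option σ :=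
  w.foldl (fun oq a => oq.bind fun p => A.step p a) (some q)

/-- Running the automaton from the start state. -/
def eval (A : IDFA α σ) (w : List α) : Option σ :=
  A.evalFrom A.start w

/-- The language recognized by an incomplete DFA: words on which the run is
defined and ends in an accepting state. -/
def accepts (A : IDFA α σ) : Set (List α) :=
  {w | ∃ q ∈ A.accept, A.eval w = some q}

/-- `#tr(A)`: the number of (defined) transitions of `A`. -/
noncomputable def trCount (A : IDFA α σ) : ℕ :=
  {p : σ × α | (A.step p.1 p.2).isSome}.ncard

/-- `#tr(A, b)`: the number of `b`-transitions of `A`. -/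
noncomputable def trCountOn (A : IDFA α σ) (b : α) : ℕ :=
  {q : σ | (A.step q b).isSome}.ncard

/-- An incomplete DFA is connected if every state is reachable from the start state. -/
def Connected (A : IDFA α σ) : Prop :=
  ∀ q : σ, ∃ w : List α, A.evalFrom A.start w = some q

end IDFA

/-- A language is regular iff it is recognized by some incomplete DFA with
finitely many states. -/
def IsRegularLang {α : Type} (L : Set (List α)) : Prop :=
  ∃ (σ : Type) (_ : Finite σ) (A : IDFA α σ), A.accepts = L

/-- `tc(L)`: the transition complexity of `L`, i.e. the minimal number of
transitions of any incomplete DFA recognizing `L`. -/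
noncomputable def tc {α : Type} (L : Set (List α)) : ℕ :=
  sInf {n | ∃ (σ : Type) (_ : Finite σ) (A : IDFA α σ), A.accepts = L ∧ A.trCount = n}

/-- `tc_b(L)`: the `b`-transition complexity of `L`, i.e. the minimal number of
`b`-transitions of any incomplete DFA recognizing `L`. -/
noncomputable def tcOn {α : Type} (L : Set (List α)) (b : α) : ℕ :=
  sInf {n | ∃ (σ : Type) (_ : Finite σ) (A : IDFA α σ), A.accepts = L ∧ A.trCountOn b = n}

/-- `sc(L)`: the (incomplete-DFA) state complexity of `L`, i.e. the number of
states of a minimal incomplete DFA recognizing `L`. -/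
noncomputable def sc {α : Type} (L : Set (List α)) : ℕ :=
  sInf {n | ∃ (σ : Type) (_ : Finite σ) (A : IDFA α σ), A.accepts = L ∧ Nat.card σ = n}

/-!
The union is recognized by the product automaton whose states record, for each factor, either its
current state or the fact that its run has died; a product transition exists as soon as one of the
two runs survives it. So every product transition consists of a transition of one factor together
with a live or dead state of the other, and there are at most
`#tr(A) * (|B| + 1) + #tr(B) * (|A| + 1)` of them. After discarding unreachable states, every state
other than the start is the target of a transition, whence `|A| ≤ #tr(A) + 1` and
`|B| ≤ #tr(B) + 1`.
-/

namespace IDFA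

variable {α σ τ : Type}

/-- The set of pairs `(q, a)` for which the automaton has an `a`-transition out of `q`, so that
`trCount` is its cardinality. -/
def transitions (A : IDFA α σ) : Set (σ × α) :=
  {p | (A.step p.1 p.2).isSome}

theorem evalFrom_append_singleton (A : IDFA α σ) (q : σ) (w : List α) (a : α) :
    A.evalFrom q (w ++ [a]) = (A.evalFrom q w).bind (A.step · a) := by
  simp [evalFrom]

theorem mem_accepts_iff_eval_mem {A : IDFA α σ} {w : List α} :
    w ∈ A.accepts ↔ A.eval w ∈ some '' A.accept := by
  simp [accepts, eq_comm]

theorem tc_accepts_le_trCount [Finite σ] (A : IDFA α σ) : tc A.accepts ≤ A.trCount :=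
  Nat.sInf_le ⟨σ, inferInstance, A, rfl, rfl⟩

theorem Connected.exists_step_eq_some {A : IDFA α σ} (hA : A.Connected) {q : σ}
    (hq : q ≠ A.start) : ∃ p a, A.step p a = some q := by
  obtain ⟨w, hw⟩ := hA q
  obtain rfl | ⟨w, a, rfl⟩ := w.eq_nil_or_concat'
  · exact absurd (Option.some.inj hw).symm hq
  · rw [evalFrom_append_singleton, Option.bind_eq_some_iff] at hw
    obtain ⟨p, -, hpq⟩ := hw
    exact ⟨p, a, hpq⟩

theorem Connected.card_le_trCount_add_one {A : IDFA α σ} (hA : A.Connected)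
    (hfin : A.transitions.Finite) : Nat.card σ ≤ A.trCount + 1 := by
  let targets : Set (Option σ) := (fun p => A.step p.1 p.2) '' A.transitions
  have some_image_univ_subset : some '' Set.univ ⊆ insert (some A.start) targets := by
    rintro _ ⟨q, -, rfl⟩
    by_cases hq : q = A.start
    · exact Or.inl (congrArg some hq)
    · obtain ⟨p, a, hpq⟩ := hA.exists_step_eq_some hq
      exact Or.inr ⟨(p, a), by simp [transitions, hpq], hpq⟩
  calc Nat.card σ = (some '' (Set.univ : Set σ)).ncard := by
        rw [Set.ncard_image_of_injective _ (Option.some_injective σ), Set.ncard_univ]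
    _ ≤ (insert (some A.start) targets).ncard :=
        Set.ncard_le_ncard some_image_univ_subset ((hfin.image _).insert _)
    _ ≤ targets.ncard + 1 := Set.ncard_insert_le _ _
    _ ≤ A.trCount + 1 := Nat.add_le_add_right (Set.ncard_image_le hfin) 1

/-- The set of states reached from the start state by some word; it carries the connected part
of the automaton. -/
def reachable (A : IDFA α σ) : Set σ :=
  {q | ∃ w, A.evalFrom A.start w = some q}

theorem start_mem_reachable (A : IDFA α σ) : A.start ∈ A.reachable :=
  ⟨[], rfl⟩

theorem mem_reachable_of_step_eq_some {A : IDFA α σ} {p q : σ} {a : α} (hp : p ∈ A.reachable)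
    (hpq : A.step p a = some q) : q ∈ A.reachable := by
  obtain ⟨w, hw⟩ := hp
  exact ⟨w ++ [a], by rw [evalFrom_append_singleton, hw, Option.bind_some, hpq]⟩

/-- The restriction of an automaton to its reachable states: a connected automaton with the same
language and no more transitions. -/
def connectedPart (A : IDFA α σ) : IDFA α A.reachable where
  step q a := (A.step q a).pmap Subtype.mk fun _ => mem_reachable_of_step_eq_some q.2
  start := ⟨A.start, A.start_mem_reachable⟩
  accept := Subtype.val ⁻¹' A.accept

theorem map_val_step_connectedPart (A : IDFA α σ) (q : A.reachable) (a : α) :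
    (A.connectedPart.step q a).map Subtype.val = A.step q a := by
  simp [connectedPart, Option.map_pmap]

theorem map_val_evalFrom_connectedPart (A : IDFA α σ) (q : A.reachable) (w : List α) :
    (A.connectedPart.evalFrom q w).map Subtype.val = A.evalFrom q w := by
  induction w using List.reverseRecOn with
  | nil => rfl
  | append_singleton w a ih =>
    simp only [evalFrom_append_singleton, ← ih, Option.map_bind, Option.bind_map,
      Function.comp_def, map_val_step_connectedPart]

theorem accepts_connectedPart (A : IDFA α σ) : A.connectedPart.accepts = A.accepts := by
  ext w
  have hw : (A.connectedPart.eval w).map Subtype.val = A.eval w :=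
    A.map_val_evalFrom_connectedPart A.connectedPart.start w
  rw [mem_accepts_iff_eval_mem, mem_accepts_iff_eval_mem, ← hw]
  cases A.connectedPart.eval w <;> simp [connectedPart]

theorem connected_connectedPart (A : IDFA α σ) : A.connectedPart.Connected := by
  rintro ⟨q, w, hw⟩
  refine ⟨w, Option.map_injective Subtype.val_injective ?_⟩
  exact (A.map_val_evalFrom_connectedPart A.connectedPart.start w).trans hw

theorem trCount_connectedPart_le {A : IDFA α σ} (hA : A.transitions.Finite) :
    A.connectedPart.trCount ≤ A.trCount := by
  refine Set.ncard_le_ncard_of_injOn (Prod.map Subtype.val id) ?_ ?_ hA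
  · rintro ⟨q, a⟩ hqa
    simpa [transitions, connectedPart] using hqa
  · exact (Subtype.val_injective.prodMap Function.injective_id).injOn

/-- The product automaton for the union. A component `none` means that the run of that factor is no
longer defined; a step is defined when at least one component of its target is. -/
def union (A : IDFA α σ) (B : IDFA α τ) : IDFA α (Option σ × Option τ) where
  step s a := Option.guard (fun t => t.1.isSome || t.2.isSome)
    (s.1.bind (A.step · a), s.2.bind (B.step · a))
  start := (some A.start, some B.start)
  accept := {s | s.1 ∈ some '' A.accept ∨ s.2 ∈ some '' B.accept}

theorem evalFrom_union (A : IDFA α σ) (B : IDFA α τ) (p : σ) (q : τ) (w : List α) :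
    (A.union B).evalFrom (some p, some q) w =
      Option.guard (fun t => t.1.isSome || t.2.isSome) (A.evalFrom p w, B.evalFrom q w) := by
  induction w using List.reverseRecOn with
  | nil => rfl
  | append_singleton w a ih =>
    simp only [evalFrom_append_singleton, ih]
    cases A.evalFrom p w <;> cases B.evalFrom q w <;> simp [union, Option.guard]

theorem accepts_union (A : IDFA α σ) (B : IDFA α τ) :
    (A.union B).accepts = A.accepts ∪ B.accepts := by
  ext w
  have hw : (A.union B).eval w =
      Option.guard (fun t => t.1.isSome || t.2.isSome) (A.eval w, B.eval w) :=
    A.evalFrom_union B A.start B.start w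
  simp only [Set.mem_union, mem_accepts_iff_eval_mem, hw]
  cases A.eval w <;> cases B.eval w <;> simp [union, Option.guard]

theorem transitions_union_subset (A : IDFA α σ) (B : IDFA α τ) :
    (A.union B).transitions ⊆
      (fun x : (σ × α) × Option τ => ((some x.1.1, x.2), x.1.2)) '' A.transitions ×ˢ Set.univ ∪
      (fun x : (τ × α) × Option σ => ((x.2, some x.1.1), x.1.2)) '' B.transitions ×ˢ Set.univ := by
  rintro ⟨⟨s, t⟩, a⟩ hsta
  have step_isSome : (s.bind (A.step · a)).isSome ∨ (t.bind (B.step · a)).isSome := by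
    simpa only [transitions, union, Set.mem_ofPred_eq, Option.isSome_guard, Bool.or_eq_true]
      using hsta
  rcases step_isSome with hs | ht
  · obtain ⟨p, rfl⟩ := Option.isSome_iff_exists.mp (Option.isSome_of_isSome_bind hs)
    exact Or.inl ⟨((p, a), t), ⟨hs, Set.mem_univ t⟩, rfl⟩
  · obtain ⟨q, rfl⟩ := Option.isSome_iff_exists.mp (Option.isSome_of_isSome_bind ht)
    exact Or.inr ⟨((q, a), s), ⟨ht, Set.mem_univ s⟩, rfl⟩

theorem trCount_union_le [Finite σ] [Finite τ] {A : IDFA α σ} {B : IDFA α τ}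
    (hA : A.transitions.Finite) (hB : B.transitions.Finite) :
    (A.union B).trCount ≤
      A.trCount * (Nat.card τ + 1) + B.trCount * (Nat.card σ + 1) := by
  have hA' := hA.prod (Set.finite_univ (α := Option τ))
  have hB' := hB.prod (Set.finite_univ (α := Option σ))
  calc (A.union B).trCount
    _ ≤ _ := Set.ncard_le_ncard (A.transitions_union_subset B) ((hA'.image _).union (hB'.image _))
    _ ≤ _ := Set.ncard_union_le _ _
    _ ≤ (A.transitions ×ˢ (Set.univ : Set (Option τ))).ncard +
          (B.transitions ×ˢ (Set.univ : Set (Option σ))).ncard :=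
        Nat.add_le_add (Set.ncard_image_le hA') (Set.ncard_image_le hB')
    _ = A.trCount * (Nat.card τ + 1) + B.trCount * (Nat.card σ + 1) := by
        simp only [Set.ncard_prod, Set.ncard_univ, Finite.card_option, transitions, trCount]

end IDFA

theorem IsRegularLang.exists_trCount_eq_tc {α : Type} {L : Set (List α)} (hL : IsRegularLang L) :
    ∃ (σ : Type) (_ : Finite σ) (A : IDFA α σ), A.accepts = L ∧ A.trCount = tc L := by
  obtain ⟨σ, hσ, A, hA⟩ := hL
  exact Nat.sInf_mem (s := {n | ∃ (σ : Type) (_ : Finite σ) (A : IDFA α σ),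
    A.accepts = L ∧ A.trCount = n}) ⟨A.trCount, σ, hσ, A, hA, rfl⟩

theorem IsRegularLang.exists_connected_trCount_eq_tc {α : Type} [Finite α] {L : Set (List α)}
    (hL : IsRegularLang L) :
    ∃ (σ : Type) (_ : Finite σ) (A : IDFA α σ),
      A.Connected ∧ A.accepts = L ∧ A.trCount = tc L := by
  obtain ⟨σ, _, A, rfl, hA⟩ := hL.exists_trCount_eq_tc
  refine ⟨A.reachable, inferInstance, A.connectedPart, A.connected_connectedPart,
    A.accepts_connectedPart, le_antisymm ?_ ?_⟩
  · exact hA ▸ IDFA.trCount_connectedPart_le (Set.toFinite _)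
  · exact A.accepts_connectedPart ▸ A.connectedPart.tc_accepts_le_trCount

/-- for all regular languages,
`tc(L₁ ∪ L₂) ≤ 2·(tc(L₁)·tc(L₂) + tc(L₁) + tc(L₂))`. -/
theorem tc_union_le {α : Type} [Finite α]
    (L₁ L₂ : Set (List α)) (h₁ : IsRegularLang L₁) (h₂ : IsRegularLang L₂) :
    tc (L₁ ∪ L₂) ≤ 2 * (tc L₁ * tc L₂ + tc L₁ + tc L₂) := by
  obtain ⟨σ, _, A, A_connected, rfl, hA⟩ := h₁.exists_connected_trCount_eq_tc
  obtain ⟨τ, _, B, B_connected, rfl, hB⟩ := h₂.exists_connected_trCount_eq_tc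
  have A_finite : A.transitions.Finite := Set.toFinite _
  have B_finite : B.transitions.Finite := Set.toFinite _
  rw [← hA, ← hB]
  calc tc (A.accepts ∪ B.accepts)
    _ = tc (A.union B).accepts := by rw [A.accepts_union B]
    _ ≤ (A.union B).trCount := (A.union B).tc_accepts_le_trCount
    _ ≤ A.trCount * (Nat.card τ + 1) + B.trCount * (Nat.card σ + 1) :=
        IDFA.trCount_union_le A_finite B_finite
    _ ≤ A.trCount * (B.trCount + 1 + 1) + B.trCount * (A.trCount + 1 + 1) := by
        gcongr
        · exact B_connected.card_le_trCount_add_one B_finite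
        · exact A_connected.card_le_trCount_add_one A_finite
    _ = 2 * (A.trCount * B.trCount + A.trCount + B.trCount) := by ring
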